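/- arXiv:0911.4703 — 2 statements merged into one kernel-verified Lean document; each statement's English description precedes it below -/
import Mathlib

section
/- Let Λ > 0 and K ≥ 0. Let f : [0,∞) → ℝ be differentiable with f(t) ≥ 0 for all t ≥ 0, and let G : [0,∞) → ℝ be continuous with G(t) ≥ 0 for all t ≥ 0. Assume that for all t ≥ 0, f'(t) + G(t) ≤ K + 2Λ f(t) + 2Λ ∫₀ᵗ G(s) ds. Then for all t ≥ 0, f(t) + ∫₀ᵗ G(s) ds ≤ e^{2Λt} f(0) + (K/(2Λ))(e^{2Λt} − 1). -/
open Set MeasureTheory intervalIntegral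

/-- The Gronwall-type differential inequality used in the growth bound for arbitrary
solutions of the linearized Rayleigh-Taylor equations. -/
theorem gronwall_growth_bound (Λ K : ℝ) (hΛ : 0 < Λ) (hK : 0 ≤ K)
    (f f' G : ℝ → ℝ)
    (hf : ∀ t ∈ Ici (0:ℝ), HasDerivWithinAt f (f' t) (Ici 0) t)
    (hfnn : ∀ t ∈ Ici (0:ℝ), 0 ≤ f t)
    (hGc : ContinuousOn G (Ici 0))
    (hGnn : ∀ t ∈ Ici (0:ℝ), 0 ≤ G t)
    (hineq : ∀ t ∈ Ici (0:ℝ),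
      f' t + G t ≤ K + 2 * Λ * f t + 2 * Λ * ∫ s in (0:ℝ)..t, G s) :
    ∀ t ∈ Ici (0:ℝ),
      f t + (∫ s in (0:ℝ)..t, G s)
        ≤ Real.exp (2 * Λ * t) * f 0 + K / (2 * Λ) * (Real.exp (2 * Λ * t) - 1) := by
  have hH : Continuous (fun s : ℝ => G (max s 0)) :=
    hGc.comp_continuous (by fun_prop) (fun s => le_max_right s 0)
  have hint : ∀ t ∈ Ici (0:ℝ), (∫ s in (0:ℝ)..t, G s) = ∫ s in (0:ℝ)..t, G (max s 0) := by
    intro t ht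
    apply intervalIntegral.integral_congr
    intro s hs
    rw [uIcc_of_le ht] at hs
    simp only [max_eq_left hs.1]
  have hd : ∀ t ∈ Ici (0:ℝ), HasDerivWithinAt
      (fun t => Real.exp (-(2 * Λ * t)) *
        (f t + (∫ s in (0:ℝ)..t, G (max s 0)) + K / (2 * Λ)))
      (Real.exp (-(2 * Λ * t)) * (-(2 * Λ * 1)) *
        (f t + (∫ s in (0:ℝ)..t, G (max s 0)) + K / (2 * Λ)) +
        Real.exp (-(2 * Λ * t)) * (f' t + G (max t 0))) (Ici 0) t := by
    intro t ht
    have h1 : HasDerivAt (fun t : ℝ => Real.exp (-(2 * Λ * t)))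
        (Real.exp (-(2 * Λ * t)) * (-(2 * Λ * 1))) t :=
      (((hasDerivAt_id t).const_mul (2 * Λ)).neg).exp
    have h2 : HasDerivAt (fun t : ℝ => ∫ s in (0:ℝ)..t, G (max s 0)) (G (max t 0)) t :=
      hH.integral_hasStrictDerivAt 0 t |>.hasDerivAt
    exact h1.hasDerivWithinAt.mul (((hf t ht).add h2.hasDerivWithinAt).add_const _)
  have hanti := antitoneOn_of_hasDerivWithinAt_nonpos (convex_Ici (0:ℝ))
    (fun t ht => (hd t ht).continuousWithinAt)
    (fun t ht => (hd t (interior_subset ht)).mono interior_subset)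
    (by
      intro t ht
      have ht0 : t ∈ Ici (0:ℝ) := interior_subset ht
      have h := hineq t ht0
      rw [hint t ht0] at h
      have hm : max t 0 = t := max_eq_left ht0
      rw [hm]
      have hk : 2 * Λ * (K / (2 * Λ)) = K := by field_simp
      have he := Real.exp_pos (-(2 * Λ * t))
      have : f' t + G t - 2 * Λ * (f t + (∫ s in (0:ℝ)..t, G (max s 0)) + K / (2 * Λ)) ≤ 0 := by
        linarith
      have := mul_nonpos_of_nonneg_of_nonpos he.le this
      linarith)
  intro t ht
  have h := hanti (self_mem_Ici (a := (0:ℝ))) ht ht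
  simp only [mul_zero, neg_zero, Real.exp_zero, one_mul, integral_same, add_zero] at h
  rw [hint t ht]
  have h3 := mul_le_mul_of_nonneg_left h (Real.exp_pos (2 * Λ * t)).le
  rw [← mul_assoc, ← Real.exp_add, add_neg_cancel, Real.exp_zero, one_mul] at h3
  linarith
end

section
/- Let P : ℝ → ℝ be continuously differentiable on (0,∞) with P'(r) > 0 for all r > 0, and define the enthalpy h(z) = ∫₁^z P'(r)/r dr for z > 0. Let g, c ∈ ℝ, let I ⊆ ℝ be an open interval, and let ρ : I → ℝ be continuous with ρ(x) > 0 and h(ρ(x)) = c − g x for all x ∈ I. Then for every x ∈ I, ρ is differentiable at x with ρ'(x) = −g ρ(x)/P'(ρ(x)), and the function x ↦ P(ρ(x)) is differentiable at x with derivative −g ρ(x); that is, ρ solves the hydrostatic steady-state equation d(P(ρ))/dx = −g ρ. -/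
open Set MeasureTheory intervalIntegral

/-- The steady-state density profile `ρ(x) = h⁻¹(c - g x)`, where `h` is the enthalpy
associated to the pressure law `P`, solves the hydrostatic equation `d(P(ρ))/dx = -g ρ`. -/
theorem steady_state_profile_solves_hydrostatic_ODE (P P' : ℝ → ℝ)
    (hP : ∀ r : ℝ, 0 < r → HasDerivAt P (P' r) r)
    (hP'cont : ContinuousOn P' (Ioi 0))
    (hP'pos : ∀ r : ℝ, 0 < r → 0 < P' r)
    (g c : ℝ) (I : Set ℝ) (hIopen : IsOpen I) (hIconn : I.OrdConnected)
    (ρ : ℝ → ℝ) (hρcont : ContinuousOn ρ I)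
    (hρpos : ∀ x ∈ I, 0 < ρ x)
    (hρeq : ∀ x ∈ I, (∫ r in (1:ℝ)..(ρ x), P' r / r) = c - g * x) :
    ∀ x ∈ I, HasDerivAt ρ (-g * ρ x / P' (ρ x)) x ∧
      HasDerivAt (fun y => P (ρ y)) (-g * ρ x) x := by
  intro x hx
  have hz : 0 < ρ x := hρpos x hx
  have hfc : ContinuousOn (fun r => P' r / r) (Ioi 0) :=
    hP'cont.div continuousOn_id (fun r hr => ne_of_gt hr)
  have hnhds : Ioi (0:ℝ) ∈ nhds (ρ x) := Ioi_mem_nhds hz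
  have hint : IntervalIntegrable (fun r => P' r / r) volume 1 (ρ x) := by
    apply ContinuousOn.intervalIntegrable
    apply hfc.mono
    intro r hr
    exact lt_of_lt_of_le (lt_min one_pos hz) hr.1
  have hstrict : HasStrictDerivAt (fun u => ∫ r in (1:ℝ)..u, P' r / r)
      (P' (ρ x) / ρ x) (ρ x) :=
    integral_hasStrictDerivAt_right hint
      (hfc.stronglyMeasurableAtFilter isOpen_Ioi (ρ x) hz) (hfc.continuousAt hnhds)
  have hpos := hP'pos _ hz
  have hne : P' (ρ x) / ρ x ≠ 0 := (div_pos hpos hz).ne'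
  have hInv := (hstrict.to_localInverse hne).hasDerivAt
  have hleft := (hstrict.hasStrictFDerivAt_equiv hne).eventually_left_inverse
  have hIn : I ∈ nhds x := hIopen.mem_nhds hx
  have hev := (hρcont.continuousAt hIn).eventually hleft
  have hlin : HasDerivAt (fun y : ℝ => c - g * y) (-g) x := by
    simpa using ((hasDerivAt_id x).const_mul g).const_sub c
  simp only [hρeq x hx] at hInv
  have hcomp := HasDerivAt.comp x hInv hlin
  have hρ : HasDerivAt ρ (-g * ρ x / P' (ρ x)) x := by
    have h1 := hcomp.congr_of_eventuallyEq (f₁ := ρ) (by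
      filter_upwards [hev, hIn] with y hy hyI
      simp only [hρeq y hyI] at hy
      exact hy.symm)
    refine h1.congr_deriv ?_
    have := hpos.ne'
    have := hz.ne'
    field_simp
  refine ⟨hρ, ?_⟩
  have h2 := HasDerivAt.comp x (hP _ hz) hρ
  refine h2.congr_deriv ?_
  have := hpos.ne'
  field_simp
end
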